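/- arXiv:2106.11474 — 4 statements merged into one kernel-verified Lean document; each statement's English description precedes it below -/
import Mathlib

section
/- Let R be a commutative ring, S a multiplicative subset of R, and 0 → A → B → C → 0 an S-exact sequence of R-modules in which B is S-injective. Then for every R-module M and every integer n ≥ 1, there exists an S-isomorphism between Ext^n_R(M, C) and Ext^{n+1}_R(M, A). -/
open CategoryTheory

universe u

/-- A module is uniformly `S`-torsion if a single `s ∈ S` kills it. -/
def UnifSTorsion {R : Type u} [CommRing R] (S : Submonoid R) (M : Type*) [Zero M] [SMul R M] :
    Prop :=
  ∃ s ∈ S, ∀ m : M, s • m = (0 : M)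

/-- The sequence `X --u--> Y --v--> Z` is `S`-exact at `Y`. -/
def SExactAt {R : Type u} [CommRing R] (S : Submonoid R) {X Y Z : Type*}
    [Zero Y] [SMul R Y] [Zero Z] (u : X → Y) (v : Y → Z) : Prop :=
  ∃ s ∈ S, (∀ y : Y, v y = 0 → ∃ x : X, s • y = u x) ∧ ∀ x : X, v (s • u x) = 0

/-- `f` is an `S`-isomorphism: kernel and cokernel uniformly `S`-torsion, elementwise. -/
def IsSIso {R : Type u} [CommRing R] (S : Submonoid R) {M N : Type*}
    [Zero M] [SMul R M] [Zero N] [SMul R N] (f : M → N) : Prop :=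
  (∃ s ∈ S, ∀ x : M, f x = 0 → s • x = 0) ∧ (∃ s ∈ S, ∀ y : N, ∃ x : M, s • y = f x)

section SIso

variable {R : Type u} [CommRing R] {S : Submonoid R}

lemma IsSIso.comp {M N L : Type*} [AddCommGroup M] [Module R M] [AddCommGroup N] [Module R N]
    [AddCommGroup L] [Module R L] {f : M →ₗ[R] N} {g : N →ₗ[R] L}
    (hg : IsSIso S g) (hf : IsSIso S f) : IsSIso S (g ∘ₗ f) := by
  obtain ⟨⟨a, ha, hfk⟩, b, hb, hfc⟩ := hf
  obtain ⟨⟨c, hc, hgk⟩, d, hd, hgc⟩ := hg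
  refine ⟨⟨a * c, S.mul_mem ha hc, fun x hx => ?_⟩, b * d, S.mul_mem hb hd, fun y => ?_⟩
  · rw [mul_smul]
    exact hfk _ (by simpa using hgk _ hx)
  · obtain ⟨z, hz⟩ := hgc y
    obtain ⟨x, hx⟩ := hfc z
    exact ⟨x, by rw [mul_smul, hz, ← map_smul, hx]; rfl⟩

lemma IsSIso.of_linearEquiv {M N : Type*} [AddCommGroup M] [Module R M] [AddCommGroup N]
    [Module R N] (e : M ≃ₗ[R] N) : IsSIso S e.toLinearMap :=
  ⟨⟨1, S.one_mem, fun x hx => by simpa using hx⟩,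
    1, S.one_mem, fun y => ⟨e.symm y, by simp⟩⟩

lemma IsSIso.of_comp_eq_smul {M N : Type*} [AddCommGroup M] [Module R M] [AddCommGroup N]
    [Module R N] {f : M →ₗ[R] N} {g : N →ₗ[R] M} {s : R} (hs : s ∈ S)
    (hgf : ∀ x, g (f x) = s • x) (hfg : ∀ y, f (g y) = s • y) : IsSIso S f :=
  ⟨⟨s, hs, fun x hx => by rw [← hgf, hx, map_zero]⟩, s, hs, fun y => ⟨g y, (hfg y).symm⟩⟩

/-- An `S`-isomorphism has an inverse up to multiplication by an element of `S`. -/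
lemma IsSIso.exists_comp_eq_smul {M N : Type*} [AddCommGroup M] [Module R M] [AddCommGroup N]
    [Module R N] {f : M →ₗ[R] N} (hf : IsSIso S f) :
    ∃ (g : N →ₗ[R] M), ∃ s ∈ S, (∀ x, g (f x) = s • x) ∧ ∀ y, f (g y) = s • y := by
  obtain ⟨⟨a, ha, hk⟩, b, hb, hc⟩ := hf
  choose p hp using hc
  have key (x y : M) (h : f x = f y) : a • x = a • y := by
    rw [← sub_eq_zero, ← smul_sub]
    exact hk _ (by rw [map_sub, h, sub_self])
  refine ⟨{ toFun := fun y => a • p y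
            map_add' := fun y z => ?_
            map_smul' := fun r y => ?_ }, a * b, S.mul_mem ha hb, fun x => ?_, fun y => ?_⟩
  · rw [← smul_add]
    exact key _ _ (by rw [map_add, ← hp, ← hp, ← hp, smul_add])
  · rw [RingHom.id_apply, smul_comm r a]
    exact key _ _ (by rw [map_smul, ← hp, ← hp, smul_comm])
  · rw [mul_smul]
    exact key _ _ (by rw [← hp, map_smul])
  · change f (a • p y) = _
    rw [map_smul, ← hp, mul_smul]

lemma UnifSTorsion.of_linearEquiv {M N : Type*} [AddCommGroup M] [Module R M] [AddCommGroup N]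
    [Module R N] (e : M ≃ₗ[R] N) (h : UnifSTorsion S M) : UnifSTorsion S N := by
  obtain ⟨s, hs, h⟩ := h
  exact ⟨s, hs, fun y => e.symm.injective (by rw [map_smul, h, map_zero])⟩

end SIso

namespace CategoryTheory.ProjectiveResolution

variable {R : Type u} [CommRing R] {M : ModuleCat.{u} R} (P : ProjectiveResolution M)

lemma smul_extMk {Y : ModuleCat.{u} R} {n : ℕ} (r : R) (f : P.complex.X n ⟶ Y) (m : ℕ)
    (hm : n + 1 = m) (hf : P.complex.d m n ≫ f = 0) :
    r • P.extMk f m hm hf = P.extMk (r • f) m hm (by rw [Linear.comp_smul, hf, smul_zero]) := by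
  rw [Abelian.Ext.smul_eq_comp_mk₀, extMk_comp_mk₀]
  simp only [Linear.comp_smul, Category.comp_id]

/-- The map sending a cocycle in `Hom(P, Y)` to its class in `Abelian.Ext M Y (n + 1)`. -/
noncomputable def extMkLinearMap (Y : ModuleCat.{u} R) (n : ℕ) :
    LinearMap.ker ((P.complex.linearYonedaObj R Y).sc' n (n + 1) (n + 2)).g.hom →ₗ[R]
      Abelian.Ext M Y (n + 1) where
  toFun x := P.extMk (n := n + 1) x.1 (n + 2) rfl x.2
  map_add' x y := (P.add_extMk (n := n + 1) x.1 y.1 (n + 2) rfl x.2 y.2).symm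
  map_smul' r x := (P.smul_extMk (n := n + 1) r x.1 (n + 2) rfl x.2).symm

lemma extMkLinearMap_surjective (Y : ModuleCat.{u} R) (n : ℕ) :
    Function.Surjective (P.extMkLinearMap Y n) := fun α => by
  obtain ⟨f, hf, rfl⟩ := P.extMk_surjective α (n + 2) rfl
  exact ⟨⟨f, hf⟩, rfl⟩

lemma ker_extMkLinearMap (Y : ModuleCat.{u} R) (n : ℕ) :
    LinearMap.ker (P.extMkLinearMap Y n) = LinearMap.range
      ((P.complex.linearYonedaObj R Y).sc' n (n + 1) (n + 2)).moduleCatToCycles := by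
  ext x
  refine (P.extMk_eq_zero_iff (n := n + 1) x.1 (n + 2) rfl x.2 n rfl).trans ?_
  exact exists_congr fun g => (Subtype.ext_iff (a1 :=
    ((P.complex.linearYonedaObj R Y).sc' n (n + 1) (n + 2)).moduleCatToCycles g)).symm

/-- The derived functor `Ext` agrees in positive degrees with `Ext` computed in the
derived category. -/
noncomputable def extLinearEquiv (Y : ModuleCat.{u} R) (n : ℕ) :
    ((Ext R (ModuleCat.{u} R) (n + 1)).obj (Opposite.op M)).obj Y ≃ₗ[R]
      Abelian.Ext M Y (n + 1) :=
  (P.isoExt (n + 1) Y ≪≫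
    (P.complex.linearYonedaObj R Y).homologyIsoSc' n (n + 1) (n + 2) (by simp) (by simp) ≪≫
      ShortComplex.moduleCatHomologyIso _).toLinearEquiv ≪≫ₗ
    Submodule.quotEquivOfEq _ _ (P.ker_extMkLinearMap Y n).symm ≪≫ₗ
    (P.extMkLinearMap Y n).quotKerEquivOfSurjective (P.extMkLinearMap_surjective Y n)

end CategoryTheory.ProjectiveResolution

section Ext

open Abelian

variable {R : Type u} [CommRing R] {S : Submonoid R}

/-- Dimension shifting: `S`-injectivity forces all higher `Ext` modules to be uniformly
`S`-torsion. -/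
lemma unifSTorsion_ext_succ {B : ModuleCat.{u} R}
    (hB : ∀ N : ModuleCat.{u} R, UnifSTorsion S (Ext N B 1)) (n : ℕ) (M : ModuleCat.{u} R) :
    UnifSTorsion S (Ext M B (n + 1)) := by
  induction n generalizing M with
  | zero => exact hB M
  | succ n ih =>
    let T := ShortComplex.mk _ _ (Limits.kernel.condition (Projective.π M))
    have hT : T.ShortExact :=
      { exact := ShortComplex.exact_of_f_is_kernel _ (Limits.kernelIsKernel T.g) }
    obtain ⟨s, hs, h⟩ := ih T.X₁
    refine ⟨s, hs, fun x => ?_⟩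
    obtain ⟨y, rfl⟩ := Ext.contravariant_sequence_exact₃ hT B x
      (Ext.eq_zero_of_projective _) (show 1 + (n + 1) = n + 1 + 1 by omega)
    rw [← Ext.comp_smul, h, Ext.comp_zero]

/-- `Ext` carries `S`-isomorphisms in the second variable to `S`-isomorphisms. -/
lemma IsSIso.postcomp {X Y : ModuleCat.{u} R} {f : X ⟶ Y} (hf : IsSIso S f.hom)
    (M : ModuleCat.{u} R) (n : ℕ) :
    IsSIso S ((Ext.mk₀ f).postcompOfLinear R M (add_zero n)) := by
  obtain ⟨g, s, hs, hgf, hfg⟩ := hf.exists_comp_eq_smul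
  have hgf' : f ≫ ModuleCat.ofHom g = s • 𝟙 X := by ext x; exact hgf x
  have hfg' : ModuleCat.ofHom g ≫ f = s • 𝟙 Y := by ext x; exact hfg x
  refine IsSIso.of_comp_eq_smul
    (g := (Ext.mk₀ (ModuleCat.ofHom g)).postcompOfLinear R M (add_zero n)) hs
    (fun x => ?_) fun y => ?_
  · simp [hgf', Ext.smul_eq_comp_mk₀]
  · simp [hfg', Ext.smul_eq_comp_mk₀]

/-- The connecting map of a short exact sequence whose middle term has uniformly `S`-torsion
`Ext` modules is an `S`-isomorphism. -/
lemma isSIso_postcomp_extClass {T : ShortComplex (ModuleCat.{u} R)} (hT : T.ShortExact)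
    (M : ModuleCat.{u} R) (n : ℕ) (h₀ : UnifSTorsion S (Ext M T.X₂ n))
    (h₁ : UnifSTorsion S (Ext M T.X₂ (n + 1))) :
    IsSIso S (hT.extClass.postcompOfLinear R M (rfl : n + 1 = n + 1)) := by
  obtain ⟨a, ha, h₀⟩ := h₀
  obtain ⟨b, hb, h₁⟩ := h₁
  refine ⟨⟨a, ha, fun x hx => ?_⟩, b, hb, fun y => ?_⟩
  · obtain ⟨z, rfl⟩ := Ext.covariant_sequence_exact₃ M hT x rfl hx
    rw [← Ext.smul_comp, h₀, Ext.zero_comp]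
  · obtain ⟨x, hx⟩ := Ext.covariant_sequence_exact₁ M hT (b • y)
      (by rw [Ext.smul_comp, h₁]) rfl
    exact ⟨x, hx.symm⟩

end Ext

/-- If `0 → A → B → C → 0` is `S`-exact with `B` `S`-injective, then for every module `M`
and every `n ≥ 1` there is an `S`-isomorphism `Ext^n(M, C) → Ext^{n+1}(M, A)`. -/
theorem stmt5 {R : Type u} [CommRing R] (S : Submonoid R)
    {A B C : ModuleCat.{u} R} (f : A ⟶ B) (g : B ⟶ C)
    (hA : ∃ s ∈ S, ∀ x : A, f x = 0 → s • x = (0 : A))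
    (hB : SExactAt S (⇑f) (⇑g))
    (hC : ∃ s ∈ S, ∀ c : C, ∃ b : B, s • c = g b)
    (hBinj : ∀ N : ModuleCat.{u} R,
      UnifSTorsion S (((Ext R (ModuleCat.{u} R) 1).obj (Opposite.op N)).obj B)) :
    ∀ (M : ModuleCat.{u} R) (n : ℕ), 1 ≤ n →
      ∃ e : ((Ext R (ModuleCat.{u} R) n).obj (Opposite.op M)).obj C ⟶
            ((Ext R (ModuleCat.{u} R) (n + 1)).obj (Opposite.op M)).obj A,
        IsSIso S (⇑e) := by
  intro M n hn
  obtain ⟨n, rfl⟩ := Nat.exists_eq_add_of_le' hn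
  obtain ⟨a, ha, hA⟩ := hA
  obtain ⟨b, hb, hBk, hBz⟩ := hB
  let T : ShortComplex (ModuleCat.{u} R) :=
    ShortComplex.mk (ModuleCat.ofHom (LinearMap.ker g.hom).subtype)
      (ModuleCat.ofHom g.hom.rangeRestrict) (by ext x; exact x.2)
  have hT : T.ShortExact := ModuleCat.shortComplex_shortExact T
    (fun x => ⟨fun hx => ⟨⟨x, congrArg Subtype.val hx⟩, rfl⟩, by
      rintro ⟨y, rfl⟩; exact Subtype.ext y.2⟩)
    Subtype.val_injective g.hom.surjective_rangeRestrict
  have hI : IsSIso S (LinearMap.range g.hom).subtype := by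
    obtain ⟨c, hc, h⟩ := hC
    refine ⟨⟨1, S.one_mem, fun x hx => ?_⟩, c, hc, fun y => ?_⟩
    · rw [one_smul]
      exact Subtype.ext hx
    · obtain ⟨z, hz⟩ := h y
      exact ⟨⟨g z, z, rfl⟩, hz⟩
  have hK : IsSIso S ((b • f.hom).codRestrict (LinearMap.ker g.hom) hBz) := by
    refine ⟨⟨a * b, S.mul_mem ha hb, fun x hx => ?_⟩, b * b, S.mul_mem hb hb, fun y => ?_⟩
    · rw [mul_smul]
      exact hA _ ((f.hom.map_smul b x).trans (congrArg Subtype.val hx))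
    · obtain ⟨x, hx⟩ := hBk y.1 y.2
      refine ⟨x, Subtype.ext ?_⟩
      rw [mul_smul]
      exact congrArg (b • ·) hx
  obtain ⟨p, s, hs, hp₁, hp₂⟩ := hI.exists_comp_eq_smul
  have hp : IsSIso S p := IsSIso.of_comp_eq_smul hs hp₂ hp₁
  obtain ⟨q, t, ht, hq₁, hq₂⟩ := hK.exists_comp_eq_smul
  have hq : IsSIso S q := IsSIso.of_comp_eq_smul ht hq₂ hq₁
  have hB' := unifSTorsion_ext_succ (B := B) fun N =>
    (hBinj N).of_linearEquiv ((projectiveResolution N).extLinearEquiv B 0)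
  let P := projectiveResolution M
  refine ⟨ModuleCat.ofHom _,
    (IsSIso.of_linearEquiv (P.extLinearEquiv A (n + 1)).symm).comp <|
      (IsSIso.postcomp (f := ModuleCat.ofHom q) hq M (n + 2)).comp <|
      (isSIso_postcomp_extClass hT M (n + 1) (hB' n M) (hB' (n + 1) M)).comp <|
      (IsSIso.postcomp (f := ModuleCat.ofHom p) hp M (n + 1)).comp <|
      IsSIso.of_linearEquiv (P.extLinearEquiv C n)⟩
end

section
/- Let R be a commutative ring, S a multiplicative subset of R, M an R-module and n ≥ 1 an integer. If there exists an exact sequence of R-modules 0 → F_n → F_{n-1} → ⋯ → F_1 → F_0 → M → 0 in which F_0, F_1, …, F_{n-1} are projective and F_n is S-projective, then Ext^{n+1}_R(M, N) is uniformly S-torsion for every R-module N. -/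
open CategoryTheory

universe u

universe t v w

/-- An element `s` kills the homology of a short complex of modules if and only if it sends
cycles to boundaries. -/
lemma CategoryTheory.ShortComplex.smul_homology_eq_zero_iff {R : Type u} [CommRing R]
    (T : ShortComplex (ModuleCat.{v} R)) (s : R) :
    (∀ m : T.homology, s • m = 0) ↔ ∀ x : T.X₂, T.g x = 0 → ∃ y : T.X₁, T.f y = s • x := by
  let φ : T.homology ≃ₗ[R] (LinearMap.ker T.g.hom ⧸ LinearMap.range T.moduleCatToCycles) :=
    T.moduleCatHomologyIso.toLinearEquiv
  have hφ : (∀ m : T.homology, s • m = 0) ↔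
      ∀ x : LinearMap.ker T.g.hom, s • x ∈ LinearMap.range T.moduleCatToCycles := by
    refine ⟨fun h x ↦ ?_, fun h m ↦ φ.injective ?_⟩
    · rw [← Submodule.Quotient.mk_eq_zero, Submodule.Quotient.mk_smul]
      have := congrArg φ (h (φ.symm (Submodule.Quotient.mk x)))
      simpa using this
    · obtain ⟨x, hx⟩ := Submodule.Quotient.mk_surjective _ (φ m)
      rw [map_smul, map_zero, ← hx, ← Submodule.Quotient.mk_smul,
        Submodule.Quotient.mk_eq_zero]
      exact h x
  rw [hφ]
  constructor
  · intro h x hx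
    obtain ⟨y, hy⟩ := h ⟨x, hx⟩
    exact ⟨y, congrArg Subtype.val hy⟩
  · rintro h ⟨x, hx⟩
    obtain ⟨y, hy⟩ := h x hx
    exact ⟨y, Subtype.ext hy⟩

section

variable {R : Type u} [CommRing R] {C : Type v} [Category.{w} C] [Abelian C] [Linear R C]

namespace CategoryTheory.ProjectiveResolution

variable {X : C} (P : ProjectiveResolution X) (s : R) (n : ℕ) (Y : C)

lemma smul_ext_eq_zero_iff [EnoughProjectives C] :
    (∀ m : ((Ext R C (n + 1)).obj (Opposite.op X)).obj Y, s • m = 0) ↔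
      ∀ f : P.complex.X (n + 1) ⟶ Y, P.complex.d (n + 2) (n + 1) ≫ f = 0 →
        ∃ g : P.complex.X n ⟶ Y, P.complex.d (n + 1) n ≫ g = s • f := by
  let K := P.complex.linearYonedaObj R Y
  let ψ := (P.isoExt (R := R) (n + 1) Y ≪≫ ShortComplex.homologyMapIso
    (K.isoSc' n (n + 1) (n + 2) (by simp) (by simp))).toLinearEquiv
  have hψ : (∀ m : ((Ext R C (n + 1)).obj (Opposite.op X)).obj Y, s • m = 0) ↔
      ∀ m : (K.sc' n (n + 1) (n + 2)).homology, s • m = 0 := by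
    refine ⟨fun h m ↦ ψ.symm.injective ?_, fun h m ↦ ψ.injective ?_⟩
    · rw [map_smul, map_zero, h]
    · rw [map_smul, map_zero, h]
  rw [hψ, ShortComplex.smul_homology_eq_zero_iff]
  rfl

lemma smul_abelianExt_eq_zero_iff [HasExt.{t} C] :
    (∀ m : Abelian.Ext X Y (n + 1), s • m = 0) ↔
      ∀ f : P.complex.X (n + 1) ⟶ Y, P.complex.d (n + 2) (n + 1) ≫ f = 0 →
        ∃ g : P.complex.X n ⟶ Y, P.complex.d (n + 1) n ≫ g = s • f := by
  have key (f : P.complex.X (n + 1) ⟶ Y) (hf : P.complex.d (n + 2) (n + 1) ≫ f = 0) :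
      s • P.extMk f (n + 2) rfl hf = 0 ↔
        ∃ g : P.complex.X n ⟶ Y, P.complex.d (n + 1) n ≫ g = s • f := by
    rw [Abelian.Ext.smul_eq_comp_mk₀, extMk_comp_mk₀, P.extMk_eq_zero_iff _ _ _ _ n rfl]
    simp
  refine ⟨fun h f hf ↦ (key f hf).1 (h _), fun h m ↦ ?_⟩
  obtain ⟨f, hf, rfl⟩ := P.extMk_surjective m (n + 2) rfl
  exact (key f hf).2 (h f hf)

end CategoryTheory.ProjectiveResolution

/-- The left derived functors of `Hom` and the morphisms in the derived category have the same
annihilators in positive degrees. -/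
lemma smul_ext_eq_zero_iff [EnoughProjectives C] [HasExt.{t} C] (s : R) (n : ℕ) (X Y : C) :
    (∀ m : ((Ext R C (n + 1)).obj (Opposite.op X)).obj Y, s • m = 0) ↔
      ∀ m : Abelian.Ext X Y (n + 1), s • m = 0 :=
  ((projectiveResolution X).smul_ext_eq_zero_iff s n Y).trans
    ((projectiveResolution X).smul_abelianExt_eq_zero_iff s n Y).symm

lemma CategoryTheory.ShortComplex.ShortExact.smul_abelianExt_eq_zero [HasExt.{t} C]
    {T : ShortComplex C} (hT : T.ShortExact) [Projective T.X₂] (s : R) (n : ℕ) (Y : C)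
    (h : ∀ m : Abelian.Ext T.X₁ Y (n + 1), s • m = 0) (m : Abelian.Ext T.X₃ Y (n + 2)) :
    s • m = 0 := by
  obtain ⟨x, rfl⟩ := Abelian.Ext.contravariant_sequence_exact₃ hT Y m
    (Abelian.Ext.eq_zero_of_projective _) (n₀ := n + 1) (by lia)
  rw [← Abelian.Ext.comp_smul, h, Abelian.Ext.comp_zero]

end

/-- Dimension shifting along an exact sequence `0 → F_{n+1} → F_n → ⋯ → F_0 → M → 0` with
`F_0, …, F_n` projective. -/
lemma smul_abelianExt_eq_zero_of_resolution {R : Type u} [CommRing R] (s : R)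
    (N : ModuleCat.{u} R) (n : ℕ) (M : ModuleCat.{u} R)
    (F : ℕ → ModuleCat.{u} R) (d : ∀ i : ℕ, F (i + 1) ⟶ F i) (e : F 0 ⟶ M)
    (hinj : Function.Injective ⇑(d n))
    (hmid : ∀ i : ℕ, i < n → Function.Exact ⇑(d (i + 1)) ⇑(d i))
    (hexact0 : Function.Exact ⇑(d 0) ⇑e)
    (hsurj : Function.Surjective ⇑e)
    (hproj : ∀ i : ℕ, i ≤ n → Module.Projective R (F i))
    (h : ∀ m : Abelian.Ext (F (n + 1)) N 1, s • m = 0) :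
    ∀ m : Abelian.Ext M N (n + 2), s • m = 0 := by
  have hP : Projective (F 0) := (IsProjective.iff_projective _).1 (hproj 0 (by lia))
  induction n generalizing M F with
  | zero =>
    let T : ShortComplex (ModuleCat.{u} R) :=
      ShortComplex.mk (d 0) e (by ext x; exact hexact0.apply_apply_eq_zero x)
    have : Projective T.X₂ := hP
    exact (ModuleCat.shortComplex_shortExact T hexact0 hinj hsurj).smul_abelianExt_eq_zero s 0 N h
  | succ n ih =>
    let K : ModuleCat.{u} R := ModuleCat.of R (LinearMap.ker e.hom)
    let T : ShortComplex (ModuleCat.{u} R) :=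
      ShortComplex.mk (ModuleCat.ofHom (LinearMap.ker e.hom).subtype : K ⟶ F 0) e
        (by ext x; exact x.2)
    have : Projective T.X₂ := hP
    have hT : T.ShortExact := ModuleCat.shortComplex_shortExact T
      (LinearMap.exact_subtype_ker_map e.hom) Subtype.val_injective hsurj
    refine hT.smul_abelianExt_eq_zero s (n + 1) N ?_
    let e' : F 1 ⟶ K := ModuleCat.ofHom
      ((d 0).hom.codRestrict _ fun x ↦ hexact0.apply_apply_eq_zero x)
    refine ih K (fun i ↦ F (i + 1)) (fun i ↦ d (i + 1)) e' hinj
      (fun i hi ↦ hmid (i + 1) (by lia)) (fun x ↦ ?_) (fun x ↦ ?_)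
      (fun i hi ↦ hproj (i + 1) (by lia)) h
      ((IsProjective.iff_projective _).1 (hproj 1 (by lia)))
    · rw [← hmid 0 (by lia) x]
      exact Subtype.ext_iff
    · obtain ⟨y, hy⟩ := (hexact0 x.1).1 x.2
      exact ⟨y, Subtype.ext hy⟩

/-- If there is an exact sequence `0 → F_n → ⋯ → F_1 → F_0 → M → 0` with `F_0, …, F_{n-1}`
projective and `F_n` `S`-projective (`n ≥ 1`), then `Ext^{n+1}(M, N)` is uniformly
`S`-torsion for every `N`. -/
theorem stmt8 {R : Type u} [CommRing R] (S : Submonoid R) (M : ModuleCat.{u} R)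
    (n : ℕ) (hn : 1 ≤ n)
    (F : ℕ → ModuleCat.{u} R) (d : ∀ i : ℕ, F (i + 1) ⟶ F i) (e : F 0 ⟶ M)
    (hinj : Function.Injective ⇑(d (n - 1)))
    (hmid : ∀ i : ℕ, i + 2 ≤ n → Function.Exact ⇑(d (i + 1)) ⇑(d i))
    (hexact0 : Function.Exact ⇑(d 0) ⇑e)
    (hsurj : Function.Surjective ⇑e)
    (hproj : ∀ i : ℕ, i < n → Module.Projective R (F i))
    (hFn : ∀ N : ModuleCat.{u} R,
      UnifSTorsion S (((Ext R (ModuleCat.{u} R) 1).obj (Opposite.op (F n))).obj N)) :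
    ∀ N : ModuleCat.{u} R,
      UnifSTorsion S (((Ext R (ModuleCat.{u} R) (n + 1)).obj (Opposite.op M)).obj N) := by
  intro N
  obtain ⟨s, hs, h⟩ := hFn N
  refine ⟨s, hs, ?_⟩
  rw [smul_ext_eq_zero_iff] at h ⊢
  obtain ⟨n, rfl⟩ : ∃ m, n = m + 1 := ⟨n - 1, by lia⟩
  exact smul_abelianExt_eq_zero_of_resolution s N n M F d e hinj (fun i hi ↦ hmid i (by lia))
    hexact0 hsurj (fun i hi ↦ hproj i (by lia)) h
end

section
/- Let R be a commutative ring, S a multiplicative subset of R, and 0 → A →f B →g C → 0 an exact sequence of R-modules that is S-split, i.e., there exist s₁ ∈ S and an R-linear map f' : B → A with f' ∘ f = s₁·id_A. Then for every integer n ≥ 1 and every R-module N, Ext^n_R(B, N) is uniformly S-torsion if and only if both Ext^n_R(A, N) and Ext^n_R(C, N) are uniformly S-torsion. (Hence S-pd_R(B) = max{S-pd_R(A), S-pd_R(C)}.) -/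
open CategoryTheory

universe u

namespace CategoryTheory

section LinearOpposite

variable {R : Type*} [Semiring R] {C : Type*} [Category* C] [Preadditive C] [Linear R C]

/-- The opposite of an `R`-linear category is `R`-linear. -/
instance linearOpposite : Linear R Cᵒᵖ where
  homModule X Y :=
    { smul := fun r φ => (r • φ.unop).op
      one_smul := fun φ => Quiver.Hom.unop_inj (one_smul R φ.unop)
      mul_smul := fun r s φ => Quiver.Hom.unop_inj (mul_smul r s φ.unop)
      smul_zero := fun r => Quiver.Hom.unop_inj (smul_zero (A := Y.unop ⟶ X.unop) r)
      smul_add := fun r φ ψ => Quiver.Hom.unop_inj (smul_add r φ.unop ψ.unop)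
      add_smul := fun r s φ => Quiver.Hom.unop_inj (add_smul r s φ.unop)
      zero_smul := fun φ => Quiver.Hom.unop_inj (zero_smul R φ.unop) }
  smul_comp _ _ _ r φ ψ := Quiver.Hom.unop_inj (Linear.comp_smul _ _ _ ψ.unop r φ.unop)
  comp_smul _ _ _ φ r ψ := Quiver.Hom.unop_inj (Linear.smul_comp _ _ _ r ψ.unop φ.unop)

lemma unop_smul_hom {X Y : Cᵒᵖ} (r : R) (φ : X ⟶ Y) : (r • φ).unop = r • φ.unop := rfl

end LinearOpposite

instance linearYoneda_obj_rightOp_linear {R : Type*} [CommRing R] {C : Type*} [Category* C]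
    [Preadditive C] [Linear R C] (Y : C) :
    Functor.Linear R ((linearYoneda R C).obj Y).rightOp where
  map_smul φ r := by
    apply Quiver.Hom.unop_inj
    ext ψ
    exact Linear.smul_comp _ _ _ r φ ψ

end CategoryTheory

lemma HomologicalComplex.homologyMap_smul {R : Type*} [Semiring R] {C : Type*} [Category* C]
    [Preadditive C] [Linear R C] {ι : Type*} {c : ComplexShape ι} {K L : HomologicalComplex C c}
    (φ : K ⟶ L) (r : R) (i : ι) [K.HasHomology i] [L.HasHomology i] :
    homologyMap (r • φ) i = r • homologyMap φ i :=
  ShortComplex.homologyMap_smul ((shortComplexFunctor C c i).map φ) r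

namespace CategoryTheory.Functor

variable {C D : Type*} [Category* C] [Category* D] [Abelian C] [HasProjectiveResolutions C]
  [Abelian D]

instance leftDerived_additive (F : C ⥤ D) [F.Additive] (n : ℕ) : (F.leftDerived n).Additive where
  map_add {X Y φ ψ} := by
    let P := projectiveResolution X
    let Q := projectiveResolution Y
    rw [← cancel_mono (Q.isoLeftDerivedObj F n).hom, Preadditive.add_comp,
      ProjectiveResolution.isoLeftDerivedObj_hom_naturality φ P Q _
        (ProjectiveResolution.lift_commutes_zero φ P Q) F n,
      ProjectiveResolution.isoLeftDerivedObj_hom_naturality ψ P Q _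
        (ProjectiveResolution.lift_commutes_zero ψ P Q) F n,
      ProjectiveResolution.isoLeftDerivedObj_hom_naturality (φ + ψ) P Q
        (ProjectiveResolution.lift φ P Q + ProjectiveResolution.lift ψ P Q)
        ((Preadditive.add_comp _ _ _ _ _ _).trans
          ((congr_arg₂ (· + ·) (ProjectiveResolution.lift_commutes_zero φ P Q)
            (ProjectiveResolution.lift_commutes_zero ψ P Q)).trans
            (Preadditive.comp_add _ _ _ _ _ _).symm)) F n,
      Functor.map_add, Preadditive.comp_add]

instance leftDerived_linear {R : Type*} [Semiring R] [CategoryTheory.Linear R C]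
    [CategoryTheory.Linear R D] (F : C ⥤ D) [F.Additive] [F.Linear R] (n : ℕ) :
    (F.leftDerived n).Linear R where
  map_smul {X Y} φ r := by
    let P := projectiveResolution X
    let Q := projectiveResolution Y
    rw [← cancel_mono (Q.isoLeftDerivedObj F n).hom, CategoryTheory.Linear.smul_comp,
      ProjectiveResolution.isoLeftDerivedObj_hom_naturality φ P Q _
        (ProjectiveResolution.lift_commutes_zero φ P Q) F n,
      ProjectiveResolution.isoLeftDerivedObj_hom_naturality (r • φ) P Q
        (r • ProjectiveResolution.lift φ P Q)
        ((CategoryTheory.Linear.smul_comp _ _ _ _ _ _).trans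
          ((congr_arg (r • ·) (ProjectiveResolution.lift_commutes_zero φ P Q)).trans
            (CategoryTheory.Linear.comp_smul _ _ _ _ _ _).symm)) F n,
      ← CategoryTheory.Linear.comp_smul]
    congr 1
    rw [Functor.comp_map, Functor.map_smul]
    exact HomologicalComplex.homologyMap_smul _ _ _

end CategoryTheory.Functor

/-- An `S`-split short exact sequence of modules has an `S`-section `g'` of `g`, which together
with the `S`-retraction `f'` decomposes multiplication by `s` on the middle term. -/
lemma ModuleCat.exists_section_of_smul_retraction {R : Type u} [CommRing R]
    {A B C : ModuleCat.{u} R} {f : A ⟶ B} {g : B ⟶ C} (hexact : Function.Exact ⇑f ⇑g)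
    (hsurj : Function.Surjective ⇑g) {s : R} {f' : B ⟶ A} (hf' : ∀ a : A, f' (f a) = s • a) :
    ∃ g' : C ⟶ B, g' ≫ g = s • 𝟙 C ∧ f' ≫ f + g ≫ g' = s • 𝟙 B := by
  let φ : B →ₗ[R] B := s • LinearMap.id - f.hom ∘ₗ f'.hom
  have hker : LinearMap.ker g.hom ≤ LinearMap.ker φ := by
    intro b hb
    obtain ⟨a, rfl⟩ := (hexact b).1 hb
    change s • f a - f (f' (f a)) = 0
    rw [hf', map_smul, sub_self]
  let e := g.hom.quotKerEquivOfSurjective hsurj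
  let g' : C →ₗ[R] B := (LinearMap.ker g.hom).liftQ φ hker ∘ₗ e.symm.toLinearMap
  have hg' (b : B) : g' (g b) = s • b - f (f' b) := by
    have he : e.symm (g b) = Submodule.Quotient.mk b := e.symm_apply_eq.2 rfl
    change (LinearMap.ker g.hom).liftQ φ hker (e.symm (g b)) = _
    rw [he]
    rfl
  refine ⟨ModuleCat.ofHom g', ?_, ?_⟩
  · ext c
    obtain ⟨b, rfl⟩ := hsurj c
    change g (g' (g b)) = s • g b
    rw [hg', map_sub, map_smul, hexact.apply_apply_eq_zero, sub_zero]
  · ext b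
    change f (f' b) + g' (g b) = s • b
    rw [hg', add_sub_cancel]

lemma UnifSTorsion.of_comp_eq_smul {R : Type u} [CommRing R] {S : Submonoid R}
    {M N : ModuleCat.{u} R} (hN : UnifSTorsion S N) {s : R} (hs : s ∈ S) (φ : M ⟶ N) (ψ : N ⟶ M)
    (h : φ ≫ ψ = s • 𝟙 M) : UnifSTorsion S M := by
  obtain ⟨t, ht, htN⟩ := hN
  refine ⟨t * s, S.mul_mem ht hs, fun m => ?_⟩
  have hm : ψ (φ m) = s • m := ConcreteCategory.congr_hom h m
  rw [mul_smul, ← hm, ← map_smul, htN, map_zero]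

lemma UnifSTorsion.of_comp_add_comp_eq_smul {R : Type u} [CommRing R] {S : Submonoid R}
    {M N P : ModuleCat.{u} R} (hN : UnifSTorsion S N) (hP : UnifSTorsion S P) {s : R} (hs : s ∈ S)
    (φ : M ⟶ N) (ψ : N ⟶ M) (φ' : M ⟶ P) (ψ' : P ⟶ M)
    (h : φ ≫ ψ + φ' ≫ ψ' = s • 𝟙 M) : UnifSTorsion S M := by
  obtain ⟨t, ht, htN⟩ := hN
  obtain ⟨t', ht', htP⟩ := hP
  refine ⟨t * t' * s, S.mul_mem (S.mul_mem ht ht') hs, fun m => ?_⟩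
  have hm : ψ (φ m) + ψ' (φ' m) = s • m := ConcreteCategory.congr_hom h m
  rw [mul_smul, ← hm, smul_add, mul_comm t t', mul_smul, ← map_smul, htN, map_zero, smul_zero,
    mul_comm t' t, mul_smul, ← map_smul ψ'.hom t', htP, map_zero, smul_zero, add_zero]

/-- Let `0 → A --f--> B --g--> C → 0` be an exact sequence that is `S`-split, i.e. there
are `s₁ ∈ S` and `f' : B → A` with `f' ∘ f = s₁ • id`. Then for every `n ≥ 1` and every `N`,
`Ext^n(B, N)` is uniformly `S`-torsion iff both `Ext^n(A, N)` and `Ext^n(C, N)` are. -/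
theorem stmt13 {R : Type u} [CommRing R] (S : Submonoid R)
    {A B C : ModuleCat.{u} R} (f : A ⟶ B) (g : B ⟶ C)
    (hinj : Function.Injective ⇑f)
    (hexact : Function.Exact ⇑f ⇑g)
    (hsurj : Function.Surjective ⇑g)
    (hsplit : ∃ s₁ ∈ S, ∃ f' : B ⟶ A, ∀ a : A, f' (f a) = s₁ • a) :
    ∀ (n : ℕ), 1 ≤ n → ∀ N : ModuleCat.{u} R,
      (UnifSTorsion S (((Ext R (ModuleCat.{u} R) n).obj (Opposite.op B)).obj N) ↔
        UnifSTorsion S (((Ext R (ModuleCat.{u} R) n).obj (Opposite.op A)).obj N) ∧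
          UnifSTorsion S (((Ext R (ModuleCat.{u} R) n).obj (Opposite.op C)).obj N)) := by
  intro n _ N
  obtain ⟨s, hs, f', hf'⟩ := hsplit
  obtain ⟨g', hg', hfg⟩ := ModuleCat.exists_section_of_smul_retraction hexact hsurj hf'
  have hff' : f ≫ f' = s • 𝟙 A := by
    ext a
    exact hf' a
  let E := ((linearYoneda R (ModuleCat.{u} R)).obj N).rightOp.leftDerived n
  have hA : (E.map f').unop ≫ (E.map f).unop = s • 𝟙 (E.obj A).unop := by
    rw [← unop_comp, ← E.map_comp, hff', E.map_smul, E.map_id, unop_smul_hom, unop_id]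
  have hC : (E.map g).unop ≫ (E.map g').unop = s • 𝟙 (E.obj C).unop := by
    rw [← unop_comp, ← E.map_comp, hg', E.map_smul, E.map_id, unop_smul_hom, unop_id]
  have hB : (E.map f).unop ≫ (E.map f').unop + (E.map g').unop ≫ (E.map g).unop =
      s • 𝟙 (E.obj B).unop := by
    rw [← unop_comp, ← unop_comp, ← unop_add, ← E.map_comp, ← E.map_comp, ← E.map_add, hfg,
      E.map_smul, E.map_id, unop_smul_hom, unop_id]
  change UnifSTorsion S (E.obj B).unop ↔
    UnifSTorsion S (E.obj A).unop ∧ UnifSTorsion S (E.obj C).unop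
  exact ⟨fun h => ⟨h.of_comp_eq_smul hs _ _ hA, h.of_comp_eq_smul hs _ _ hC⟩,
    fun h => h.1.of_comp_add_comp_eq_smul h.2 hs _ _ _ _ hB⟩
end

section
/- Let θ : R → T be a homomorphism of commutative rings, S a multiplicative subset of R, and θ(S) its image, a multiplicative subset of T. Let M be a T-module and m, k ≥ 0 integers. Suppose that Ext^{m+1}_T(M, N) is uniformly θ(S)-torsion for every T-module N, and that Ext^{k+1}_R(T, N) is uniformly S-torsion for every R-module N (T regarded as an R-module via θ). Then Ext^{m+k+1}_R(M, N) is uniformly S-torsion for every R-module N, where M is regarded as an R-module by restriction of scalars along θ. (That is, S-pd_R(M) ≤ θ(S)-pd_T(M) + S-pd_R(T).) -/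
open CategoryTheory

universe u

section TorsionExt

open Limits Abelian

universe w v t

/-- A scalar `s` kills the homology of a short complex of modules if and only if the `s`-multiple
of every cycle is a boundary. -/
lemma CategoryTheory.ShortComplex.forall_homology_smul_eq_zero_iff {A : Type*} [CommRing A]
    (K : ShortComplex (ModuleCat.{v} A)) (s : A) :
    (∀ x : K.homology, s • x = 0) ↔
      ∀ z : K.X₂, K.g z = 0 → ∃ y : K.X₁, K.f y = s • z := by
  let e := K.moduleCatHomologyIso.toLinearEquiv
  have he : (∀ x : K.homology, s • x = 0) ↔ ∀ x : K.moduleCatLeftHomologyData.H, s • x = 0 :=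
    ⟨fun h x ↦ by simpa using congrArg e (h (e.symm x)),
      fun h x ↦ e.injective (by simpa using h (e x))⟩
  rw [he]
  constructor
  · intro h z hz
    have h₀ := h (Submodule.Quotient.mk (⟨z, hz⟩ : LinearMap.ker K.g.hom))
    obtain ⟨y, hy⟩ := (Submodule.Quotient.mk_eq_zero _).1 h₀
    exact ⟨y, congrArg Subtype.val hy⟩
  · intro h x
    obtain ⟨⟨z, hz⟩, rfl⟩ := Submodule.Quotient.mk_surjective _ x
    obtain ⟨y, hy⟩ := h z hz
    exact (Submodule.Quotient.mk_eq_zero _).2 ⟨y, Subtype.ext hy⟩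

variable {C : Type t} [Category.{v} C] [Abelian C] {A : Type*} [CommRing A] [Linear A C]

namespace CategoryTheory.ProjectiveResolution

variable {X : C} (P : ProjectiveResolution X) (Y : C) (n : ℕ) (s : A)

lemma forall_ext_smul_eq_zero_iff [EnoughProjectives C] :
    (∀ x : ((Ext A C (n + 1)).obj (Opposite.op X)).obj Y, s • x = 0) ↔
      ∀ f : P.complex.X (n + 1) ⟶ Y, P.complex.d (n + 2) (n + 1) ≫ f = 0 →
        ∃ g : P.complex.X n ⟶ Y, P.complex.d (n + 1) n ≫ g = s • f := by
  let K := P.complex.linearYonedaObj A Y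
  let e := (P.isoExt (R := A) (n + 1) Y ≪≫
    ShortComplex.homologyMapIso (K.isoSc' n (n + 1) (n + 2) (by simp) (by simp))).toLinearEquiv
  have he : (∀ x : ((Ext A C (n + 1)).obj (Opposite.op X)).obj Y, s • x = 0) ↔
      ∀ x : (K.sc' n (n + 1) (n + 2)).homology, s • x = 0 :=
    ⟨fun h x ↦ by simpa using congrArg e (h (e.symm x)),
      fun h x ↦ e.injective (by simpa using h (e x))⟩
  rw [he, ShortComplex.forall_homology_smul_eq_zero_iff]
  rfl

lemma smul_extMk_s16 [HasExt.{w} C] {n : ℕ} (f : P.complex.X n ⟶ Y) (m : ℕ) (hm : n + 1 = m)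
    (hf : P.complex.d m n ≫ f = 0) :
    s • P.extMk f m hm hf = P.extMk (s • f) m hm (by simp [hf]) := by
  simp [Abelian.Ext.smul_eq_comp_mk₀, extMk_comp_mk₀]

lemma forall_abelianExt_smul_eq_zero_iff [HasExt.{w} C] :
    (∀ x : Abelian.Ext.{w} X Y (n + 1), s • x = 0) ↔
      ∀ f : P.complex.X (n + 1) ⟶ Y, P.complex.d (n + 2) (n + 1) ≫ f = 0 →
        ∃ g : P.complex.X n ⟶ Y, P.complex.d (n + 1) n ≫ g = s • f := by
  constructor
  · intro h f hf
    rw [← P.extMk_eq_zero_iff (s • f) (n + 2) rfl (by simp [hf]) n rfl,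
      ← P.smul_extMk_s16 Y s f (n + 2) rfl hf, h]
  · intro h x
    obtain ⟨f, hf, rfl⟩ := P.extMk_surjective x (n + 2) rfl
    rw [smul_extMk_s16, P.extMk_eq_zero_iff _ _ _ _ n rfl]
    exact h f hf

end CategoryTheory.ProjectiveResolution

/-- The `Ext` functors derived from `Hom` and the `Ext` groups of the derived category are killed
by the same scalars. -/
lemma forall_ext_smul_eq_zero_iff_abelianExt [EnoughProjectives C] [HasExt.{w} C]
    (X Y : C) (n : ℕ) (s : A) :
    (∀ x : ((Ext A C (n + 1)).obj (Opposite.op X)).obj Y, s • x = 0) ↔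
      ∀ x : Abelian.Ext.{w} X Y (n + 1), s • x = 0 := by
  rw [(ProjectiveResolution.of X).forall_ext_smul_eq_zero_iff,
    (ProjectiveResolution.of X).forall_abelianExt_smul_eq_zero_iff]

namespace CategoryTheory.Abelian.Ext

/-- Every object is the first term of a short exact sequence with injective middle term. -/
lemma exists_shortExact_injective_X₂ [EnoughInjectives C] (N : C) :
    ∃ (K : ShortComplex C) (_ : K.ShortExact) (_ : Injective K.X₂), K.X₁ = N :=
  ⟨ShortComplex.mk (Injective.ι N) (cokernel.π (Injective.ι N)) (by simp),
    { exact := ShortComplex.exact_cokernel _ }, by dsimp; infer_instance,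
    rfl⟩

variable [HasExt.{w} C]

/-- If `s • 𝟙 X` factors through `Y` and `s'` kills `Ext Y N n`, then `s * s'` kills
`Ext X N n`. -/
lemma mul_smul_eq_zero_of_comp_eq_smul_id {X Y N : C} {n : ℕ} {s s' : A}
    (i : X ⟶ Y) (p : Y ⟶ X) (hip : i ≫ p = s • 𝟙 X)
    (h : ∀ x : Ext.{w} Y N n, s' • x = 0) (x : Ext.{w} X N n) : (s * s') • x = 0 := by
  have hs : s • x = (mk₀ i).comp ((mk₀ p).comp x (zero_add n)) (zero_add n) := by
    rw [mk₀_comp_mk₀_assoc, hip, mk₀_smul, smul_comp, mk₀_id_comp]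
  rw [mul_comm, mul_smul, hs, ← comp_smul, h, comp_zero]

/-- Dimension shifting along a short exact sequence with injective middle term. -/
lemma smul_eq_zero_of_injective_X₂ {K : ShortComplex C} (hK : K.ShortExact) [Injective K.X₂]
    {X : C} {n : ℕ} {s : A} (h : ∀ x : Ext.{w} X K.X₁ (n + 2), s • x = 0)
    (x : Ext.{w} X K.X₃ (n + 1)) : s • x = 0 := by
  obtain ⟨y, hy⟩ := covariant_sequence_exact₃ X hK (s • x) rfl (by rw [smul_comp, h])
  rw [← hy, eq_zero_of_injective y, zero_comp]

lemma smul_eq_zero_of_injective_X₂' {K : ShortComplex C} (hK : K.ShortExact) [Injective K.X₂]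
    {X : C} {n : ℕ} {s : A} (h : ∀ x : Ext.{w} X K.X₃ n, s • x = 0)
    (x : Ext.{w} X K.X₁ (n + 1)) : s • x = 0 := by
  obtain ⟨y, rfl⟩ := covariant_sequence_exact₁ X hK x (eq_zero_of_injective _) rfl
  rw [← smul_comp, h, zero_comp]

lemma smul_eq_zero_of_projective_X₂ {K : ShortComplex C} (hK : K.ShortExact) [Projective K.X₂]
    {N : C} {n : ℕ} {s : A} (h : ∀ x : Ext.{w} K.X₃ N (n + 2), s • x = 0)
    (x : Ext.{w} K.X₁ N (n + 1)) : s • x = 0 := by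
  obtain ⟨y, hy⟩ := contravariant_sequence_exact₁ hK N (s • x) (add_comm 1 (n + 1))
    (by rw [comp_smul, h])
  rw [← hy, eq_zero_of_projective y, comp_zero]

lemma mul_smul_eq_zero_of_shortExact {K : ShortComplex C} (hK : K.ShortExact)
    {N : C} {n : ℕ} {s s' : A} (h₁ : ∀ x : Ext.{w} K.X₁ N n, s • x = 0)
    (h₂ : ∀ x : Ext.{w} K.X₂ N (n + 1), s' • x = 0)
    (x : Ext.{w} K.X₃ N (n + 1)) : (s * s') • x = 0 := by
  obtain ⟨y, hy⟩ := contravariant_sequence_exact₃ hK N (s' • x) (by rw [comp_smul, h₂])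
    (add_comm 1 n)
  rw [mul_smul, ← hy, ← comp_smul, h₁, comp_zero]

variable [EnoughInjectives C]

/-- A scalar killing `Ext (X j) N (n + 1)` for all `j` kills `Ext (∐ X) N (n + 1)`. -/
lemma smul_eq_zero_of_isColimit_cofan {J : Type*} {X : J → C} {c : Cofan X} (hc : IsColimit c)
    {s : A} (n : ℕ) (N : C) (h : ∀ j, ∀ x : Ext.{w} (X j) N (n + 1), s • x = 0)
    (x : Ext.{w} c.pt N (n + 1)) : s • x = 0 := by
  induction n generalizing N with
  | zero =>
    obtain ⟨K, hK, _, rfl⟩ := exists_shortExact_injective_X₂ N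
    obtain ⟨y, rfl⟩ := covariant_sequence_exact₁ _ hK x (eq_zero_of_injective _) rfl
    obtain ⟨f, rfl⟩ := (mk₀_bijective _ _).2 y
    have hg (j : J) : ∃ g : X j ⟶ K.X₂, g ≫ K.g = s • (c.inj j ≫ f) := by
      obtain ⟨z, hz⟩ := covariant_sequence_exact₃ (X j) hK (mk₀ (s • (c.inj j ≫ f)))
        (zero_add 1) (by rw [mk₀_smul, smul_comp, h])
      obtain ⟨g, rfl⟩ := (mk₀_bijective _ _).2 z
      exact ⟨g, (mk₀_bijective _ _).1 (by simpa using hz)⟩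
    choose g hg using hg
    have hf : s • f = Cofan.IsColimit.desc hc g ≫ K.g :=
      Cofan.IsColimit.hom_ext hc _ _ fun j ↦ by simp [hg]
    rw [← smul_comp, ← mk₀_smul, hf, ← mk₀_comp_mk₀, comp_assoc_of_second_deg_zero,
      hK.comp_extClass, comp_zero]
  | succ n ih =>
    obtain ⟨K, hK, _, rfl⟩ := exists_shortExact_injective_X₂ N
    exact smul_eq_zero_of_injective_X₂' hK
      (ih K.X₃ fun j ↦ smul_eq_zero_of_injective_X₂ hK (h j)) x

lemma exists_smul_eq_zero_add (S : Submonoid A) {X : C} {n : ℕ}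
    (h : ∀ N : C, ∃ s ∈ S, ∀ x : Ext.{w} X N n, s • x = 0) (m : ℕ) (N : C) :
    ∃ s ∈ S, ∀ x : Ext.{w} X N (n + m), s • x = 0 := by
  induction m generalizing N with
  | zero => exact h N
  | succ m ih =>
    obtain ⟨K, hK, _, rfl⟩ := exists_shortExact_injective_X₂ N
    obtain ⟨s, hs, hs'⟩ := ih K.X₃
    exact ⟨s, hs, smul_eq_zero_of_injective_X₂' hK hs'⟩

end CategoryTheory.Abelian.Ext

/-- Every module is the quotient of a coproduct of copies of the ring. -/
lemma ModuleCat.exists_shortExact_sigma {T : Type u} [CommRing T] (M : ModuleCat.{u} T) :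
    ∃ (J : Type u) (L : ModuleCat.{u} T) (i : L ⟶ ∐ fun _ : J ↦ ModuleCat.of T T)
      (p : (∐ fun _ : J ↦ ModuleCat.of T T) ⟶ M) (w : i ≫ p = 0),
      (ShortComplex.mk i p w).ShortExact := by
  let p : (∐ fun _ : M ↦ ModuleCat.of T T) ⟶ M :=
    Sigma.desc fun x ↦ ModuleCat.ofHom (LinearMap.toSpanSingleton T M x)
  have : Epi p := by
    rw [ModuleCat.epi_iff_surjective]
    intro x
    refine ⟨Sigma.ι (fun _ : M ↦ ModuleCat.of T T) x (1 : T), ?_⟩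
    rw [← ConcreteCategory.comp_apply, Sigma.ι_desc]
    exact one_smul T x
  exact ⟨M, kernel p, kernel.ι p, p, kernel.condition p, { exact := ShortComplex.exact_kernel p }⟩

/-- Change of rings for uniformly torsion `Ext`. -/
lemma ModuleCat.exists_smul_ext_restrictScalars_eq_zero {R T : Type u} [CommRing R] [CommRing T]
    (θ : R →+* T) (S : Submonoid R) (m k : ℕ) (M : ModuleCat.{u} T)
    (h₁ : ∀ N : ModuleCat.{u} T, ∃ s ∈ S, ∀ x : Abelian.Ext.{u} M N (m + 1), θ s • x = 0)
    (h₂ : ∀ N : ModuleCat.{u} R, ∃ s ∈ S, ∀ x : Abelian.Ext.{u}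
      ((ModuleCat.restrictScalars θ).obj (ModuleCat.of T T)) N (k + 1), s • x = 0)
    (N : ModuleCat.{u} R) :
    ∃ s ∈ S, ∀ x : Abelian.Ext.{u} ((ModuleCat.restrictScalars θ).obj M) N (m + k + 1),
      s • x = 0 := by
  let F := ModuleCat.restrictScalars.{u} θ
  have free (J : Type u) (n : ℕ) : ∃ s ∈ S, ∀ x : Abelian.Ext.{u}
      (F.obj (∐ fun _ : J ↦ ModuleCat.of T T)) N (k + 1 + n), s • x = 0 := by
    obtain ⟨s, hs, hs'⟩ := Ext.exists_smul_eq_zero_add S h₂ n N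
    rw [add_right_comm] at hs' ⊢
    exact ⟨s, hs, Ext.smul_eq_zero_of_isColimit_cofan
      (isColimitOfHasCoproductOfPreservesColimit F fun _ : J ↦ ModuleCat.of T T) (k + n) N
      fun _ ↦ hs'⟩
  induction m generalizing M with
  | zero =>
    obtain ⟨J, L, _, p, _, hK⟩ := M.exists_shortExact_sigma
    obtain ⟨s, hs, hs'⟩ := h₁ L
    obtain ⟨y, hy⟩ := Ext.covariant_sequence_exact₃ M hK (Ext.mk₀ (θ s • 𝟙 M)) (zero_add 1)
      (by rw [Ext.mk₀_smul, Ext.smul_comp]; exact hs' _)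
    obtain ⟨i, rfl⟩ := (Ext.mk₀_bijective _ _).2 y
    have hi : i ≫ p = θ s • 𝟙 M := (Ext.mk₀_bijective _ _).1 (by simpa using hy)
    have hFi : F.map i ≫ F.map p = s • 𝟙 (F.obj M) := by
      rw [← F.map_comp, hi]
      rfl
    obtain ⟨s', ht, ht'⟩ := free J 0
    rw [zero_add]
    exact ⟨s * s', S.mul_mem hs ht, Ext.mul_smul_eq_zero_of_comp_eq_smul_id _ _ hFi ht'⟩
  | succ m ih =>
    obtain ⟨J, L, i, p, w, hK⟩ := M.exists_shortExact_sigma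
    have : Projective (ShortComplex.mk i p w).X₂ := by dsimp; infer_instance
    obtain ⟨s, hs, hs'⟩ := ih L fun N ↦ by
      obtain ⟨s, hs, hs'⟩ := h₁ N
      exact ⟨s, hs, Ext.smul_eq_zero_of_projective_X₂ hK hs'⟩
    obtain ⟨s', ht, ht'⟩ := free J (m + 1)
    rw [show k + 1 + (m + 1) = m + k + 1 + 1 by lia] at ht'
    rw [show m + 1 + k + 1 = m + k + 1 + 1 by lia]
    exact ⟨s * s', S.mul_mem hs ht,
      Ext.mul_smul_eq_zero_of_shortExact (hK.map_of_exact F) hs' ht'⟩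

end TorsionExt

/-- Change of rings: if `θ : R → T`, `M` is a `T`-module with `Ext^{m+1}_T(M, -)` uniformly
`θ(S)`-torsion, and the `R`-module `T` has `Ext^{k+1}_R(T, -)` uniformly `S`-torsion, then
`Ext^{m+k+1}_R(M, -)` is uniformly `S`-torsion (`M`, `T` viewed as `R`-modules via `θ`).
That is, `S`-pd_R(M) ≤ `θ(S)`-pd_T(M) + `S`-pd_R(T). -/
theorem stmt16 {R T : Type u} [CommRing R] [CommRing T] (θ : R →+* T) (S : Submonoid R)
    [Module R T] (hTs : ∀ (r : R) (t : T), r • t = θ r * t)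
    (M : Type u) [AddCommGroup M] [Module T M] [Module R M]
    (hMs : ∀ (r : R) (x : M), r • x = θ r • x)
    (m k : ℕ)
    (h1 : ∀ N : ModuleCat.{u} T, ∃ s ∈ S,
      ∀ x : ((Ext T (ModuleCat.{u} T) (m + 1)).obj (Opposite.op (ModuleCat.of T M))).obj N,
        θ s • x = 0)
    (h2 : ∀ N : ModuleCat.{u} R, ∃ s ∈ S,
      ∀ x : ((Ext R (ModuleCat.{u} R) (k + 1)).obj (Opposite.op (ModuleCat.of R T))).obj N,
        s • x = 0) :
    ∀ N : ModuleCat.{u} R, ∃ s ∈ S,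
      ∀ x : ((Ext R (ModuleCat.{u} R) (m + k + 1)).obj
          (Opposite.op (ModuleCat.of R M))).obj N,
        s • x = 0 := by
  have iso (X : Type u) [AddCommGroup X] [Module T X] [Module R X]
      (hX : ∀ (r : R) (x : X), r • x = θ r • x) :
      Nonempty (ModuleCat.of R X ≅ (ModuleCat.restrictScalars θ).obj (ModuleCat.of T X)) :=
    ⟨(show X ≃ₗ[R] (ModuleCat.restrictScalars θ).obj (ModuleCat.of T X) from
      { AddEquiv.refl X with map_smul' := hX }).toModuleIso⟩
  obtain ⟨eT⟩ := iso T hTs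
  obtain ⟨eM⟩ := iso M hMs
  simp only [forall_ext_smul_eq_zero_iff_abelianExt] at h1 h2 ⊢
  intro N
  obtain ⟨s, hs, hs'⟩ := ModuleCat.exists_smul_ext_restrictScalars_eq_zero θ S m k
    (ModuleCat.of T M) h1 (fun N ↦ by
      obtain ⟨s, hs, hs'⟩ := h2 N
      exact ⟨1 * s, by simpa using hs,
        Abelian.Ext.mul_smul_eq_zero_of_comp_eq_smul_id eT.inv eT.hom (by simp) hs'⟩) N
  exact ⟨1 * s, by simpa using hs,
    Abelian.Ext.mul_smul_eq_zero_of_comp_eq_smul_id eM.hom eM.inv (by simp) hs'⟩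
end
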